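/- arXiv:2410.22730 — 2 statements merged into one kernel-verified Lean document; each statement's English description precedes it below -/
import Mathlib

section
/- Let α : ℕ → (ℕ →. ℕ) be an acceptable numbering of the partial computable functions, i.e., there exist computable functions f, g : ℕ → ℕ such that for all e : ℕ, α e = φ (f e) and φ e = α (g e), where φ is the canonical numbering. If P ⊆ ℕ is nontrivial (P ≠ ∅ and P ≠ ℕ) and extensional with respect to α (for all m, n : ℕ, α m = α n implies (m ∈ P ↔ n ∈ P)), then P is undecidable. -/
/-- The canonical numbering of the partial computable functions:
`e ↦` the partial function computed by the `e`-th code. -/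
def canonicalNumbering (e : ℕ) : ℕ →. ℕ :=
  Nat.Partrec.Code.eval (Denumerable.ofNat Nat.Partrec.Code e)

/-! Translating codes into `α`-indices reduces membership of `eval c` in the class `α '' P` to
membership in `P`. Extensionality says that `P` is the full preimage of this class, so a decision
procedure for `P` decides the class on codes, which the classical Rice theorem excludes as soon as
the class separates two partial computable functions. -/

open Nat.Partrec (Code)

section Extensional

variable {ι β : Type*} {α : ι → β} {P : Set ι}

/-- Extensionality of an index set `P` with respect to a numbering `α`: membership in `P` depends
only on the object that is numbered. The numbering may have arbitrary indices and values. -/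
def IsExtensional (α : ι → β) (P : Set ι) : Prop :=
  ∀ m n : ι, α m = α n → (m ∈ P ↔ n ∈ P)

theorem IsExtensional.apply_mem_image_iff (hP : IsExtensional α P) {i : ι} :
    α i ∈ α '' P ↔ i ∈ P :=
  ⟨fun ⟨k, hk, hki⟩ => (hP k i hki).1 hk, Set.mem_image_of_mem α⟩

end Extensional

theorem canonicalNumbering_encode (c : Code) :
    canonicalNumbering (Encodable.encode c) = c.eval := by
  rw [canonicalNumbering, Denumerable.ofNat_encode]

theorem partrec_canonicalNumbering (e : ℕ) : Nat.Partrec (canonicalNumbering e) :=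
  Code.exists_code.2 ⟨_, rfl⟩

section Numbering

variable {ι : Type*} [Primcodable ι] {α : ι → (ℕ →. ℕ)} {g : ℕ → ι} {P : Set ι}

theorem IsExtensional.eval_mem_image_manyOneReducible (hP : IsExtensional α P)
    (hg : Computable g) (hcompl : ∀ e : ℕ, canonicalNumbering e = α (g e)) :
    (fun c : Code => c.eval ∈ α '' P) ≤₀ (· ∈ P) := by
  refine ⟨fun c => g (Encodable.encode c), hg.comp Computable.encode, fun c => ?_⟩
  change c.eval ∈ α '' P ↔ g (Encodable.encode c) ∈ P
  rw [← canonicalNumbering_encode, hcompl, hP.apply_mem_image_iff]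

theorem rice_theorem_acceptable_general (hg : Computable g)
    (hcompl : ∀ e : ℕ, canonicalNumbering e = α (g e)) (hext : IsExtensional α P)
    {i j : ι} (hi : Nat.Partrec (α i)) (hj : Nat.Partrec (α j)) (hiP : i ∈ P) (hjP : j ∉ P) :
    ¬ ComputablePred (· ∈ P) := by
  intro hP
  have hclass : ComputablePred fun c : Code => c.eval ∈ α '' P :=
    ComputablePred.computable_of_manyOneReducible
      (hext.eval_mem_image_manyOneReducible hg hcompl) hP
  have hj_mem : α j ∈ α '' P :=
    ComputablePred.rice (α '' P) hclass hi hj (Set.mem_image_of_mem α hiP)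
  exact hjP (hext.apply_mem_image_iff.1 hj_mem)

end Numbering

/-- **Rice's theorem in general form.** Any nontrivial set of indices that is
extensional with respect to an acceptable numbering is undecidable. -/
theorem rice_theorem_acceptable (α : ℕ → (ℕ →. ℕ))
    (f g : ℕ → ℕ) (hf : Computable f) (hg : Computable g)
    (hcomp : ∀ e : ℕ, α e = canonicalNumbering (f e))
    (hcompl : ∀ e : ℕ, canonicalNumbering e = α (g e))
    (P : Set ℕ)
    (hne : P ≠ ∅) (hnuniv : P ≠ Set.univ)
    (hext : ∀ m n : ℕ, α m = α n → (m ∈ P ↔ n ∈ P)) :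
    ¬ ComputablePred (· ∈ P) := by
  have hα (e : ℕ) : Nat.Partrec (α e) := hcomp e ▸ partrec_canonicalNumbering (f e)
  obtain ⟨i, hi⟩ := Set.nonempty_iff_ne_empty.2 hne
  obtain ⟨j, hj⟩ := (Set.ne_univ_iff_exists_notMem P).1 hnuniv
  exact rice_theorem_acceptable_general hg hcompl hext (hα i) (hα j) hi hj
end

section
/- Let b : ℕ ≃ ℕ be a bijection such that both b and its inverse b.symm are computable. Then there exists a computable function g : ℕ → ℕ such that for every e : ℕ, φ e = b ∘ φ (g e) ∘ b.symm as partial functions; that is, for all n : ℕ, φ e n = (φ (g e) (b.symm n)).map b, where φ is the canonical numbering of the partial computable functions. -/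
/-!
Composing with fixed programs on either side is a primitive recursive operation on codes. If `s` is
a computable right inverse of a computable surjection `b`, found by unbounded search, then a code
`g e` of `s ∘ φ e ∘ a` satisfies `b ∘ φ (g e) = φ e ∘ a`. For a bijection `b` take `a = b`.
-/

open Nat.Partrec (Code)

theorem exists_computable_rightInverse {α β : Type*} [Primcodable α] [Primcodable β]
    {f : α → β} (hf : Computable f) (hsurj : Function.Surjective f) :
    ∃ s : β → α, Computable s ∧ Function.RightInverse s f := by
  classical
  let test (y : β) (k : ℕ) : Option α :=
    (Encodable.decode k).bind fun x => bif f x = y then some x else none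
  have test_computable : Computable₂ test := by
    refine Computable.option_bind (Computable.decode.comp Computable.snd) ?_
    refine Computable.cond ?_ (Computable.option_some.comp Computable.snd) (Computable.const none)
    exact Primrec.eq.decide.to_comp.comp (hf.comp Computable.snd)
      (Computable.fst.comp Computable.fst)
  have test_sound {y : β} {k : ℕ} {x : α} (hx : x ∈ test y k) : f x = y := by
    obtain ⟨x', -, hx'⟩ := Option.bind_eq_some_iff.1 hx
    grind
  have search_dom (y : β) : (Nat.rfindOpt (test y)).Dom := by
    obtain ⟨x, rfl⟩ := hsurj y
    exact Nat.rfindOpt_dom.2 ⟨Encodable.encode x, x, by simp [test]⟩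
  refine ⟨fun y => (Nat.rfindOpt (test y)).get (search_dom y), ?_, fun y => ?_⟩
  · exact (Partrec.rfindOpt test_computable).of_eq fun y => (Part.some_get (search_dom y)).symm
  · obtain ⟨k, hk⟩ := Nat.rfindOpt_spec (Part.get_mem (search_dom y))
    exact test_sound hk

theorem exists_primrec_canonicalNumbering_eq_comp {p q : ℕ →. ℕ}
    (hp : Nat.Partrec p) (hq : Nat.Partrec q) :
    ∃ g : ℕ → ℕ, Primrec g ∧
      ∀ e, canonicalNumbering (g e) = q.comp ((canonicalNumbering e).comp p) := by
  obtain ⟨c, rfl⟩ := Code.exists_code.1 hp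
  obtain ⟨d, rfl⟩ := Code.exists_code.1 hq
  refine ⟨fun e => Encodable.encode (d.comp ((Denumerable.ofNat Code e).comp c)), ?_, fun e => ?_⟩
  · exact Primrec.encode.comp (Code.primrec₂_comp.comp (Primrec.const d)
      (Code.primrec₂_comp.comp (Primrec.ofNat Code) (Primrec.const c)))
  · rw [canonicalNumbering, Denumerable.ofNat_encode]
    rfl

theorem uniform_completeness_conjugate_general {a b : ℕ → ℕ}
    (ha : Computable a) (hb : Computable b) (hsurj : Function.Surjective b) :
    ∃ g : ℕ → ℕ, Primrec g ∧
      ∀ e n : ℕ, canonicalNumbering e (a n) = (canonicalNumbering (g e) n).map b := by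
  obtain ⟨s, hs, hbs⟩ := exists_computable_rightInverse hb hsurj
  obtain ⟨g, hg, hφ⟩ := exists_primrec_canonicalNumbering_eq_comp
    (Partrec.nat_iff.1 ha.partrec) (Partrec.nat_iff.1 hs.partrec)
  refine ⟨g, hg, fun e n => ?_⟩
  have hge : canonicalNumbering (g e) n = (canonicalNumbering e (a n)).map s := calc
    canonicalNumbering (g e) n
      = ((Part.some (a n)).bind (canonicalNumbering e)).bind fun x => Part.some (s x) :=
        congrFun (hφ e) n
    _ = ((Part.some (a n)).bind (canonicalNumbering e)).map s := Part.bind_some_eq_map s _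
    _ = (canonicalNumbering e (a n)).map s := congrArg (Part.map s) (Part.bind_some _ _)
  rw [hge, Part.map_map, hbs.comp_eq_id]
  exact (Part.map_id' (fun _ => rfl) _).symm

/-- Every partial computable function arises, uniformly in its index, as the
conjugate by a computable bijection `b` of another partial computable
function. -/
theorem uniform_completeness_conjugate (b : ℕ ≃ ℕ)
    (hb : Computable ⇑b) (hbsymm : Computable ⇑b.symm) :
    ∃ g : ℕ → ℕ, Computable g ∧
      ∀ e n : ℕ, canonicalNumbering e n =
        (canonicalNumbering (g e) (b.symm n)).map ⇑b := by
  obtain ⟨g, hg, hφ⟩ := uniform_completeness_conjugate_general hb hb b.surjective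
  exact ⟨g, hg.to_comp, fun e n => by simpa using hφ e (b.symm n)⟩
end
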